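/- The plain switch distribution is strongly universal: for every stationary ergodic probability measure Q on Ω = {1,...,D}^ℤ, Q-almost surely limsup_{n→∞} (1/n)·(−log P(X_1^n)) ≤ h_Q. -/

import Mathlib

open Filter MeasureTheory
open scoped Topology

/-- Number of occurrences `c(w|z)` of `w` as a substring of `z`. -/
def cnt {D : ℕ} (w z : List (Fin D)) : ℕ :=
  ((List.range (z.length - w.length + 1)).filter
    (fun i => (z.drop i).take w.length = w)).length

/-- Count `c(w | z_1^{m-1})` of `w` in the string `z` with its last symbol removed,
with the convention that counting in a block of length `-1` (i.e. when `z` itself is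
empty) gives `0`. -/
def cntPred {D : ℕ} (w z : List (Fin D)) : ℕ :=
  if z = [] then 0 else cnt w z.dropLast

/-- The prefix `x_1^n` of the one-sided sequence `x` (0-indexed: `x i = x_{i+1}`). -/
def pref {D : ℕ} (x : ℕ → Fin D) (n : ℕ) : List (Fin D) :=
  (List.range n).map x

/-- Adaptive Markov predictor: the natural-number index corresponds to the Markov
order shifted by one, so `Bpred D xs a (k+1) = B(a | xs, k)` and
`Bpred D xs a 0 = B(a | xs, -1) = 1/D`, where
`B(x_{n+1}|x_1^n, k) = (c(x_{n+1-k}^{n+1}|x_1^n) + B(x_{n+1}|x_1^n, k-1)) /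
(c(x_{n+1-k}^{n}|x_1^{n-1}) + 1)`.  Counts of substrings whose indices fall outside
the string are taken to be zero. -/
noncomputable def Bpred (D : ℕ) (xs : List (Fin D)) (a : Fin D) : ℕ → ℝ
  | 0 => 1 / D
  | k + 1 =>
    if k ≤ xs.length then
      ((cnt (xs.drop (xs.length - k) ++ [a]) xs : ℝ) + Bpred D xs a k) /
      ((cntPred (xs.drop (xs.length - k)) xs : ℝ) + 1)
    else Bpred D xs a k

/-- Partial switch distribution `P(x_1^n, k)` with Markov order `k : ℤ`:
`P(x_1,-1) = p_0 B(x_1|-1)`, `P(x_1,0) = (1-p_0) B(x_1|0)`, `P(x_1^n,k) = 0`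
for `k < -1` or `k ≥ n`, and
`P(x_1^{n+1},k) = [p_n P(x_1^n,k) + (1-p_n) P(x_1^n,k-1)] B(x_{n+1}|x_1^n,k)`. -/
noncomputable def Ppart (D : ℕ) (p : ℕ → ℝ) (x : ℕ → Fin D) : ℕ → ℤ → ℝ
  | 0, _ => 0
  | 1, k =>
    if k = -1 then p 0 * Bpred D [] (x 0) 0
    else if k = 0 then (1 - p 0) * Bpred D [] (x 0) 1
    else 0
  | n + 2, k =>
    if -1 ≤ k ∧ k ≤ (n : ℤ) + 1 then
      (p (n + 1) * Ppart D p x (n + 1) k +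
        (1 - p (n + 1)) * Ppart D p x (n + 1) (k - 1)) *
        Bpred D (pref x (n + 1)) (x (n + 1)) (k + 1).toNat
    else 0

/-- The plain switch distribution `P(x_1^n) = Σ_{k=-1}^{n-1} P(x_1^n, k)`. -/
noncomputable def swP (D : ℕ) (p : ℕ → ℝ) (x : ℕ → Fin D) (n : ℕ) : ℝ :=
  ∑ kk ∈ Finset.range (n + 1), Ppart D p x n ((kk : ℤ) - 1)

/-- The two-sided sequence space `Ω = {1,...,D}^ℤ` with the product σ-algebra. -/
abbrev Omega (D : ℕ) := ℤ → Fin D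

/-- The shift `T : Ω → Ω`. -/
def shiftT (D : ℕ) : Omega D → Omega D := fun ω i => ω (i + 1)

/-- The cylinder set `{X_1 = x 0, ..., X_n = x (n-1)}`. -/
def cylSet (D : ℕ) (x : ℕ → Fin D) (n : ℕ) : Set (Omega D) :=
  {ω | ∀ i < n, ω ((i : ℤ) + 1) = x i}

/-- The one-sided sample path `X_1, X_2, ...` of `ω` (0-indexed). -/
def path (D : ℕ) (ω : Omega D) : ℕ → Fin D := fun i => ω ((i : ℤ) + 1)

/-- The cylinder probability `Q(x_1^n)`. -/
noncomputable def Qstr (D : ℕ) (Q : Measure (Omega D)) (x : ℕ → Fin D) (n : ℕ) : ℝ :=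
  (Q (cylSet D x n)).toReal

/-!
Fix a Markov order `k`. A sequence of predictors that reaches order `k` at time `k + 1` and never
switches again already contributes to the mixture, whence
`P(x_1^{n+1}, k) ≥ p_n B(x_{n+1}|x_1^n, k) P(x_1^n, k)` with `p_n → 1`. By the ergodic theorem,
word frequencies converge to their probabilities, so the factor `p_n B(x_{n+1}|x_1^n, k)` is
asymptotically at least the conditional probability `Q(x_{n+1-k}^{n+1}) / Q(x_{n+1-k}^n)`. Taking
logarithms and applying the ergodic theorem to the conditional information shows that
`-log P(X_1^n)` grows at rate at most `H(k + 1) - H(k)`, where `H(m)` is the entropy of `X_1^m`.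
A lower bound for all increments of `H` is a lower bound for `lim H(m) / m`, the entropy rate.

The ergodic theorem rests on the following remark: the maximum `Mₙ` of `0, S₁ f, …, Sₙ f` satisfies
`Mₙ₊₁ - Mₙ ∘ T = max (-Mₙ ∘ T) f`, which has nonnegative integral and tends to `f` wherever the
Birkhoff sums are unbounded above. If `T` is ergodic and `∫ f < 0`, they are therefore almost surely
bounded above.
-/

section RealSequences

lemma le_of_forall_le_succ_sub {u : ℕ → ℝ} {c l : ℝ} (hc : ∀ n, c ≤ u (n + 1) - u n)
    (hu : Tendsto (fun n : ℕ ↦ u n / n) atTop (𝓝 l)) : c ≤ l := by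
  have hlin : ∀ n : ℕ, n * c ≤ u n - u 0 := fun n ↦ by
    rw [← Finset.sum_range_sub]
    simpa using Finset.card_nsmul_le_sum (Finset.range n) _ c fun i _ ↦ hc i
  have hlim : Tendsto (fun n : ℕ ↦ u n / n - u 0 / n) atTop (𝓝 l) := by
    simpa using hu.sub (tendsto_const_div_atTop_nhds_zero_nat (u 0))
  refine ge_of_tendsto hlim ?_
  filter_upwards [eventually_gt_atTop 0] with n hn
  rw [← sub_div, le_div_iff₀' (by positivity)]
  exact hlin n

lemma tendsto_div_add_one_of_tendsto_div {s t : ℕ → ℝ} {a b : ℝ}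
    (hs : Tendsto (fun n : ℕ ↦ s n / n) atTop (𝓝 a))
    (ht : Tendsto (fun n : ℕ ↦ t n / n) atTop (𝓝 b)) (hb : b ≠ 0) :
    Tendsto (fun n ↦ s n / (t n + 1)) atTop (𝓝 (a / b)) := by
  have ht' : Tendsto (fun n : ℕ ↦ (t n + 1) / n) atTop (𝓝 b) := by
    simpa [add_div] using ht.add tendsto_one_div_atTop_nhds_zero_nat
  refine (hs.div ht' hb).congr' ?_
  filter_upwards [eventually_ne_atTop 0] with n hn
  exact div_div_div_cancel_right₀ (Nat.cast_ne_zero.2 hn) _ _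

lemma tendsto_one_of_tendsto_prod_range {p : ℕ → ℝ} {L : ℝ} (hp : ∀ n, p n ≠ 0) (hL : L ≠ 0)
    (h : Tendsto (fun n ↦ ∏ i ∈ Finset.range n, p i) atTop (𝓝 L)) : Tendsto p atTop (𝓝 1) := by
  have hratio := (h.comp (tendsto_add_atTop_nat 1)).div h hL
  rw [div_self hL] at hratio
  refine hratio.congr fun n ↦ ?_
  have hprod : ∏ i ∈ Finset.range n, p i ≠ 0 := Finset.prod_ne_zero_iff.2 fun i _ ↦ hp i
  simp [Finset.prod_range_succ, hprod]

lemma exists_eventually_le_add_sum {a g : ℕ → ℝ} (h : ∀ᶠ j in atTop, a (j + 1) ≤ a j + g j) :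
    ∃ C, ∀ᶠ j in atTop, a j ≤ C + ∑ i ∈ Finset.range j, g i := by
  obtain ⟨J, hJ⟩ := eventually_atTop.1 h
  refine ⟨a J - ∑ i ∈ Finset.range J, g i, eventually_atTop.2 ⟨J, fun j hj ↦ ?_⟩⟩
  induction j, hj using Nat.le_induction with
  | base => simp
  | succ j hj ih =>
    rw [Finset.sum_range_succ]
    linarith [hJ j hj]

lemma limsup_div_le_of_eventually_succ_le {a b g : ℕ → ℝ} {k : ℕ} {l : ℝ} (hb : ∀ n, 0 ≤ b n)
    (hba : ∀ᶠ j in atTop, b (j + k) ≤ a j)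
    (ha : ∀ δ > 0, ∀ᶠ j in atTop, a (j + 1) ≤ a j + (g j + δ))
    (hg : Tendsto (fun j : ℕ ↦ (∑ i ∈ Finset.range j, g i) / j) atTop (𝓝 l)) :
    limsup (fun n : ℕ ↦ b n / n) atTop ≤ l := by
  refine le_of_forall_pos_le_add fun δ hδ ↦ ?_
  obtain ⟨C, hC⟩ := exists_eventually_le_add_sum (ha δ hδ)
  have hlim : Tendsto (fun j : ℕ ↦ (C / j + (∑ i ∈ Finset.range j, g i) / j + δ) * (j / (j + k)))
      atTop (𝓝 (l + δ)) := by
    simpa using (((tendsto_const_div_atTop_nhds_zero_nat C).add hg).add_const δ).mul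
      (tendsto_natCast_div_add_atTop (k : ℝ))
  have hle : ∀ᶠ j : ℕ in atTop, b (j + k) / ((j + k : ℕ) : ℝ) ≤
      (C / j + (∑ i ∈ Finset.range j, g i) / j + δ) * (j / (j + k)) := by
    filter_upwards [hC, hba, eventually_gt_atTop 0] with j hCj hbj hj
    calc b (j + k) / ((j + k : ℕ) : ℝ)
        ≤ (C + ∑ i ∈ Finset.range j, (g i + δ)) / ((j + k : ℕ) : ℝ) := by
          gcongr
          exact hbj.trans hCj
      _ = (C / j + (∑ i ∈ Finset.range j, g i) / j + δ) * (j / (j + k)) := by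
          rw [Finset.sum_add_distrib, Finset.sum_const, Finset.card_range, nsmul_eq_mul]
          push_cast
          field_simp
          ring
  rw [← limsup_nat_add _ k, ← hlim.limsup_eq]
  exact limsup_le_limsup hle
    (isCoboundedUnder_le_of_le _ fun j ↦ div_nonneg (hb (j + k)) (Nat.cast_nonneg _))
    hlim.isBoundedUnder_le

end RealSequences

section ErgodicTheorem

variable {Ω : Type*} {T : Ω → Ω} {f : Ω → ℝ}

/-- The running maximum `max (S₀, …, Sₙ)` of the Birkhoff sums `Sₘ` of `f`. Since `S₀ = 0`, it is
nonnegative. -/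
noncomputable def maxBirkhoffSum (T : Ω → Ω) (f : Ω → ℝ) (n : ℕ) (ω : Ω) : ℝ :=
  partialSups (fun m ↦ birkhoffSum T f m ω) n

lemma maxBirkhoffSum_mono (ω : Ω) : Monotone fun n ↦ maxBirkhoffSum T f n ω :=
  partialSups_monotone _

lemma maxBirkhoffSum_nonneg (n : ℕ) (ω : Ω) : 0 ≤ maxBirkhoffSum T f n ω :=
  le_partialSups_of_le (fun m ↦ birkhoffSum T f m ω) n.zero_le

lemma maxBirkhoffSum_succ (n : ℕ) (ω : Ω) :
    maxBirkhoffSum T f (n + 1) ω = max 0 (f ω + maxBirkhoffSum T f n (T ω)) := by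
  have hshift := map_partialSups (OrderIso.addLeft (f ω)) (fun m ↦ birkhoffSum T f m (T ω)) n
  simp only [OrderIso.addLeft_apply, ← birkhoffSum_succ'] at hshift
  rw [maxBirkhoffSum, partialSups_add_one', Function.comp_def, hshift]
  rfl

lemma abs_maxBirkhoffSum_succ_sub_le (n : ℕ) (ω : Ω) :
    |maxBirkhoffSum T f (n + 1) ω - maxBirkhoffSum T f n (T ω)| ≤ |f ω| := by
  have := maxBirkhoffSum_nonneg (T := T) (f := f) n (T ω)
  rw [maxBirkhoffSum_succ]
  grind

lemma bddAbove_range_birkhoffSum_apply_iff (ω : Ω) :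
    BddAbove (Set.range fun n ↦ birkhoffSum T f n (T ω)) ↔
      BddAbove (Set.range fun n ↦ birkhoffSum T f n ω) := by
  simp only [bddAbove_def, Set.forall_mem_range]
  constructor
  · rintro ⟨C, hC⟩
    refine ⟨max 0 (f ω + C), fun n ↦ ?_⟩
    cases n with
    | zero => simp
    | succ n => simpa only [birkhoffSum_succ'] using le_max_of_le_right (by gcongr; exact hC n)
  · rintro ⟨C, hC⟩
    refine ⟨C - f ω, fun n ↦ ?_⟩
    have := hC (n + 1)
    rw [birkhoffSum_succ'] at this
    linarith

lemma eventually_maxBirkhoffSum_succ_sub_eq {ω : Ω}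
    (h : ¬ BddAbove (Set.range fun n ↦ birkhoffSum T f n ω)) :
    ∀ᶠ n in atTop, maxBirkhoffSum T f (n + 1) ω - maxBirkhoffSum T f n (T ω) = f ω := by
  rw [← bddAbove_range_birkhoffSum_apply_iff, ← bddAbove_range_partialSups] at h
  have hlim : Tendsto (fun n ↦ maxBirkhoffSum T f n (T ω)) atTop atTop :=
    tendsto_atTop_atTop_of_monotone' (maxBirkhoffSum_mono (T ω)) h
  filter_upwards [hlim.eventually_ge_atTop (-f ω)] with n hn
  rw [maxBirkhoffSum_succ, max_eq_right (by linarith), add_sub_cancel_right]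

lemma birkhoffSum_indicator_one (T : Ω → Ω) (s : Set Ω) [DecidablePred (· ∈ s)] (n : ℕ) (ω : Ω) :
    birkhoffSum T (s.indicator (1 : Ω → ℝ)) n ω = Nat.count (fun j ↦ T^[j] ω ∈ s) n := by
  simp [birkhoffSum, Nat.count_eq_card_filter_range, Set.indicator_apply]

variable [MeasurableSpace Ω] {μ : Measure Ω}

lemma integrable_birkhoffSum (hT : MeasurePreserving T μ μ) (hf : Integrable f μ) (n : ℕ) :
    Integrable (birkhoffSum T f n) μ :=
  integrable_finsetSum _ fun i _ ↦ (hT.iterate i).integrable_comp_of_integrable hf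

lemma integrable_maxBirkhoffSum (hT : MeasurePreserving T μ μ) (hf : Integrable f μ) (n : ℕ) :
    Integrable (maxBirkhoffSum T f n) μ := by
  induction n with
  | zero => exact (integrable_zero Ω ℝ μ).congr (.of_forall fun ω ↦ by simp [maxBirkhoffSum])
  | succ n ih =>
    rw [funext (maxBirkhoffSum_succ n)]
    exact (integrable_zero Ω ℝ μ).sup (hf.add (hT.integrable_comp_of_integrable ih))

lemma integral_maxBirkhoffSum_succ_sub_nonneg (hT : MeasurePreserving T μ μ)
    (hf : Integrable f μ) (n : ℕ) :
    0 ≤ ∫ ω, (maxBirkhoffSum T f (n + 1) ω - maxBirkhoffSum T f n (T ω)) ∂μ := by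
  have hint := integrable_maxBirkhoffSum hT hf
  have hinv : ∫ ω, maxBirkhoffSum T f n (T ω) ∂μ = ∫ ω, maxBirkhoffSum T f n ω ∂μ := by
    rw [← integral_map hT.aemeasurable (hT.map_eq.symm ▸ (hint n).1), hT.map_eq]
  have hcomp : Integrable (fun ω ↦ maxBirkhoffSum T f n (T ω)) μ :=
    hT.integrable_comp_of_integrable (hint n)
  rw [integral_sub (hint _) hcomp, hinv, sub_nonneg]
  exact integral_mono (hint _) (hint _) fun ω ↦ maxBirkhoffSum_mono ω n.le_succ

lemma integral_nonneg_of_ae_not_bddAbove_birkhoffSum (hT : MeasurePreserving T μ μ)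
    (hf : Integrable f μ)
    (h : ∀ᵐ ω ∂μ, ¬ BddAbove (Set.range fun n ↦ birkhoffSum T f n ω)) : 0 ≤ ∫ ω, f ω ∂μ := by
  have hint := integrable_maxBirkhoffSum hT hf
  have hlim : Tendsto
      (fun n ↦ ∫ ω, (maxBirkhoffSum T f (n + 1) ω - maxBirkhoffSum T f n (T ω)) ∂μ) atTop
      (𝓝 (∫ ω, f ω ∂μ)) := by
    refine tendsto_integral_of_dominated_convergence (fun ω ↦ |f ω|)
      (fun n ↦ ((hint _).sub (hT.integrable_comp_of_integrable (hint n))).1) hf.abs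
      (fun n ↦ .of_forall (abs_maxBirkhoffSum_succ_sub_le n)) ?_
    filter_upwards [h] with ω hω
    exact tendsto_const_nhds.congr'
      ((eventually_maxBirkhoffSum_succ_sub_eq hω).mono fun n hn ↦ hn.symm)
  exact ge_of_tendsto' hlim (integral_maxBirkhoffSum_succ_sub_nonneg hT hf)

lemma nullMeasurableSet_not_bddAbove_birkhoffSum (hT : MeasurePreserving T μ μ)
    (hf : Integrable f μ) :
    NullMeasurableSet {ω | ¬ BddAbove (Set.range fun n ↦ birkhoffSum T f n ω)} μ := by
  have hset : {ω | ¬ BddAbove (Set.range fun n ↦ birkhoffSum T f n ω)} =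
      ⋂ C : ℕ, ⋃ n, {ω | (C : ℝ) < birkhoffSum T f n ω} := by
    ext ω
    simp only [not_bddAbove_iff, Set.exists_range_iff, Set.mem_ofPred_eq, Set.mem_iInter,
      Set.mem_iUnion]
    refine ⟨fun h C ↦ h C, fun h C ↦ ?_⟩
    obtain ⟨N, hN⟩ := exists_nat_ge C
    exact (h N).imp fun n hn ↦ hN.trans_lt hn
  rw [hset]
  exact .iInter fun C ↦ .iUnion fun n ↦
    nullMeasurableSet_lt aemeasurable_const (integrable_birkhoffSum hT hf n).aemeasurable

lemma ae_bddAbove_birkhoffSum_of_integral_neg (hT : Ergodic T μ) (hf : Integrable f μ)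
    (hneg : ∫ ω, f ω ∂μ < 0) : ∀ᵐ ω ∂μ, BddAbove (Set.range fun n ↦ birkhoffSum T f n ω) := by
  have hinv : T ⁻¹' {ω | ¬ BddAbove (Set.range fun n ↦ birkhoffSum T f n ω)} =
      {ω | ¬ BddAbove (Set.range fun n ↦ birkhoffSum T f n ω)} :=
    Set.ext fun ω ↦ (bddAbove_range_birkhoffSum_apply_iff ω).not
  rcases hT.quasiErgodic.ae_mem_or_ae_notMem₀
    (nullMeasurableSet_not_bddAbove_birkhoffSum hT.toMeasurePreserving hf)
    (.of_eq hinv) with hunbdd | hbdd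
  · exact absurd hneg
      (integral_nonneg_of_ae_not_bddAbove_birkhoffSum hT.toMeasurePreserving hf hunbdd).not_gt
  · exact hbdd.mono fun ω ↦ not_not.1

variable [IsProbabilityMeasure μ]

lemma ae_eventually_birkhoffAverage_lt (hT : Ergodic T μ) (hf : Integrable f μ) {a : ℝ}
    (ha : ∫ ω, f ω ∂μ < a) : ∀ᵐ ω ∂μ, ∀ᶠ n in atTop, birkhoffAverage ℝ T f n ω < a := by
  obtain ⟨b, hfb, hba⟩ := exists_between ha
  have hneg : ∫ ω, (f ω - b) ∂μ < 0 := by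
    rw [integral_sub hf (integrable_const b)]
    simpa using hfb
  filter_upwards [ae_bddAbove_birkhoffSum_of_integral_neg hT (hf.sub (integrable_const b)) hneg]
    with ω hω
  obtain ⟨C, hC⟩ := bddAbove_def.1 hω
  rw [Set.forall_mem_range] at hC
  have hlim : Tendsto (fun n : ℕ ↦ C / n + b) atTop (𝓝 b) := by
    simpa using (tendsto_const_div_atTop_nhds_zero_nat C).add_const b
  filter_upwards [hlim.eventually_lt_const hba, eventually_gt_atTop 0] with n hn hn0
  refine lt_of_le_of_lt ?_ hn
  have hCn := hC n
  simp only [birkhoffSum, Pi.sub_apply, Finset.sum_sub_distrib, Finset.sum_const, Finset.card_range,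
    nsmul_eq_mul] at hCn
  rw [birkhoffAverage, smul_eq_mul, birkhoffSum]
  field_simp
  linarith

theorem ae_tendsto_birkhoffAverage (hT : Ergodic T μ) (hf : Integrable f μ) :
    ∀ᵐ ω ∂μ, Tendsto (birkhoffAverage ℝ T f · ω) atTop (𝓝 (∫ ω, f ω ∂μ)) := by
  have hupper : ∀ᵐ ω ∂μ, ∀ a : ℚ, ∫ ω, f ω ∂μ < a →
      ∀ᶠ n in atTop, birkhoffAverage ℝ T f n ω < a := by
    simp_rw [ae_all_iff]
    exact fun a ↦ ae_eventually_birkhoffAverage_lt hT hf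
  have hlower : ∀ᵐ ω ∂μ, ∀ a : ℚ, ∫ ω, (-f) ω ∂μ < a →
      ∀ᶠ n in atTop, birkhoffAverage ℝ T (-f) n ω < a := by
    simp_rw [ae_all_iff]
    exact fun a ↦ ae_eventually_birkhoffAverage_lt hT hf.neg
  filter_upwards [hupper, hlower] with ω hupper hlower
  refine tendsto_order.2 ⟨fun b hb ↦ ?_, fun b hb ↦ ?_⟩
  · obtain ⟨a, hfa, hab⟩ := exists_rat_btwn (neg_lt_neg hb)
    filter_upwards [hlower a (by rwa [integral_neg'])] with n hn
    rw [birkhoffAverage_neg] at hn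
    exact neg_lt_neg_iff.1 (hn.trans hab)
  · obtain ⟨a, hfa, hab⟩ := exists_rat_btwn hb
    exact (hupper a hfa).mono fun n hn ↦ hn.trans hab

lemma ae_tendsto_count_div (hT : Ergodic T μ) {s : Set Ω} [DecidablePred (· ∈ s)]
    (hs : MeasurableSet s) :
    ∀ᵐ ω ∂μ, Tendsto (fun n : ℕ ↦ (Nat.count (fun j ↦ T^[j] ω ∈ s) n : ℝ) / n) atTop
      (𝓝 (μ.real s)) := by
  have hint : Integrable (s.indicator (1 : Ω → ℝ)) μ := (integrable_const (1 : ℝ)).indicator hs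
  filter_upwards [ae_tendsto_birkhoffAverage hT hint] with ω hω
  simpa only [birkhoffAverage, birkhoffSum_indicator_one, smul_eq_mul, inv_mul_eq_div,
    integral_indicator_one hs] using hω

end ErgodicTheorem

section Words

variable {D : ℕ} {x : ℕ → Fin D}

/-- The block `x_{j+1}^{j+m}` of length `m` that follows the first `j` symbols of `x`. -/
def block (x : ℕ → Fin D) (m j : ℕ) : List (Fin D) := pref (fun i ↦ x (j + i)) m

/-- The number of occurrences in `x` of the word `w` that start at one of the first `n` positions;
they may extend beyond position `n`. -/
def wordCount (x : ℕ → Fin D) (w : List (Fin D)) (n : ℕ) : ℕ :=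
  Nat.count (fun j ↦ block x w.length j = w) n

@[simp]
lemma length_pref (x : ℕ → Fin D) (n : ℕ) : (pref x n).length = n := by
  simp [pref]

@[simp]
lemma length_block (x : ℕ → Fin D) (m j : ℕ) : (block x m j).length = m :=
  length_pref _ m

lemma pref_succ (x : ℕ → Fin D) (n : ℕ) : pref x (n + 1) = pref x n ++ [x n] := by
  simp [pref, List.range_succ]

lemma block_succ (x : ℕ → Fin D) (m j : ℕ) : block x (m + 1) j = block x m j ++ [x (j + m)] :=
  pref_succ _ m

lemma dropLast_block_succ (x : ℕ → Fin D) (m j : ℕ) :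
    (block x (m + 1) j).dropLast = block x m j := by
  rw [block_succ, List.dropLast_concat]

lemma take_drop_pref (x : ℕ → Fin D) {m j n : ℕ} (h : j + m ≤ n) :
    ((pref x n).drop j).take m = block x m j := by
  apply List.ext_getElem
  · simp; omega
  · intro i _ _
    simp [pref, block]

lemma drop_pref_add (x : ℕ → Fin D) (j k : ℕ) : (pref x (j + k)).drop j = block x k j := by
  rw [← take_drop_pref x le_rfl, List.take_of_length_le (by simp)]

lemma cnt_pref (x : ℕ → Fin D) {w : List (Fin D)} {n : ℕ} (h : w.length ≤ n) :
    cnt w (pref x n) = wordCount x w (n - w.length + 1) := by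
  rw [cnt, wordCount, Nat.count, List.countP_eq_length_filter, length_pref]
  congr 1
  refine List.filter_congr fun i hi ↦ ?_
  rw [List.mem_range] at hi
  rw [take_drop_pref x (by omega)]

lemma cnt_pref_add {k j : ℕ} (hj : 0 < j) {w : List (Fin D)} (hw : w.length = k + 1) :
    cnt w (pref x (j + k)) = wordCount x w j := by
  rw [cnt_pref x (by omega)]
  congr 1
  omega

lemma cntPred_pref_add {k j : ℕ} (hj : 0 < j) {w : List (Fin D)} (hw : w.length = k) :
    cntPred w (pref x (j + k)) = wordCount x w j := by
  obtain ⟨i, rfl⟩ := Nat.exists_eq_add_one_of_ne_zero hj.ne'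
  rw [add_right_comm, pref_succ, cntPred, if_neg (by simp), List.dropLast_concat,
    cnt_pref x (by omega)]
  congr 1
  omega

lemma cnt_concat_le_cntPred (w z : List (Fin D)) (a : Fin D) :
    cnt (w ++ [a]) z ≤ cntPred w z := by
  rcases eq_or_ne z [] with rfl | hz
  · simp [cnt]
  · rw [cntPred, if_neg hz, cnt, cnt, ← List.countP_eq_length_filter,
      ← List.countP_eq_length_filter, List.length_dropLast, List.length_append,
      List.length_singleton, Nat.sub_sub, Nat.add_comm 1]
    refine List.countP_mono_left fun i _ h ↦ ?_
    simp only [decide_eq_true_eq] at h ⊢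
    have hlen : w.length + 1 ≤ z.length - i := by
      simpa using (congrArg List.length h).ge
    rw [List.dropLast_eq_take, List.drop_take, List.take_take, min_eq_left (by omega),
      ← min_eq_left w.length.le_succ, ← List.take_take, h, List.take_left]

end Words

section Predictors

variable {D : ℕ}

lemma Bpred_pos (xs : List (Fin D)) (a : Fin D) (k : ℕ) : 0 < Bpred D xs a k := by
  induction k with
  | zero =>
    rw [Bpred]
    exact one_div_pos.2 (Nat.cast_pos.2 a.pos)
  | succ k ih =>
    rw [Bpred]
    split_ifs <;> positivity

lemma Bpred_le_one (xs : List (Fin D)) (a : Fin D) (k : ℕ) : Bpred D xs a k ≤ 1 := by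
  induction k with
  | zero =>
    rw [Bpred]
    exact div_le_one_of_le₀ (Nat.one_le_cast.2 a.pos) (Nat.cast_nonneg D)
  | succ k ih =>
    rw [Bpred]
    split_ifs
    · have := cnt_concat_le_cntPred (xs.drop (xs.length - k)) xs a
      refine div_le_one_of_le₀ ?_ (by positivity)
      gcongr
    · exact ih

lemma wordCount_div_le_Bpred (x : ℕ → Fin D) (k : ℕ) {j : ℕ} (hj : 0 < j) :
    (wordCount x (block x (k + 1) j) j : ℝ) / (wordCount x (block x k j) j + 1) ≤
      Bpred D (pref x (j + k)) (x (j + k)) (k + 1) := by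
  rw [Bpred, if_pos (by simp), length_pref, Nat.add_sub_cancel, drop_pref_add, ← block_succ,
    cnt_pref_add hj (length_block x _ j), cntPred_pref_add hj (length_block x k j)]
  gcongr
  exact le_add_of_nonneg_right (Bpred_pos _ _ k).le

end Predictors

section SwitchDistribution

variable {D : ℕ} {p : ℕ → ℝ}

lemma Ppart_nonneg (hp : ∀ n, p n ∈ Set.Icc (0 : ℝ) 1) (x : ℕ → Fin D) (n : ℕ) (k : ℤ) :
    0 ≤ Ppart D p x n k := by
  induction n using Nat.twoStepInduction generalizing k with
  | zero => simp [Ppart]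
  | one =>
    rw [Ppart]
    split_ifs
    · exact mul_nonneg (hp 0).1 (Bpred_pos _ _ _).le
    · exact mul_nonneg (sub_nonneg.2 (hp 0).2) (Bpred_pos _ _ _).le
    · exact le_rfl
  | more n _ ih =>
    rw [Ppart]
    split_ifs
    · exact mul_nonneg (add_nonneg (mul_nonneg (hp _).1 (ih _))
        (mul_nonneg (sub_nonneg.2 (hp _).2) (ih _))) (Bpred_pos _ _ _).le
    · exact le_rfl

lemma Ppart_eq_zero (x : ℕ → Fin D) {n : ℕ} {k : ℤ} (hk : k < -1 ∨ n ≤ k) :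
    Ppart D p x n k = 0 := by
  match n with
  | 0 => simp [Ppart]
  | 1 => rw [Ppart, if_neg (by omega), if_neg (by omega)]
  | n + 2 => rw [Ppart, if_neg (by omega)]

lemma Ppart_succ_le (hp : ∀ n, p n ∈ Set.Icc (0 : ℝ) 1) (x : ℕ → Fin D) {n : ℕ} (hn : 0 < n)
    (k : ℤ) :
    Ppart D p x (n + 1) k ≤ p n * Ppart D p x n k + (1 - p n) * Ppart D p x n (k - 1) := by
  obtain ⟨m, rfl⟩ := Nat.exists_eq_add_one_of_ne_zero hn.ne'
  have hmix : 0 ≤ p (m + 1) * Ppart D p x (m + 1) k +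
      (1 - p (m + 1)) * Ppart D p x (m + 1) (k - 1) :=
    add_nonneg (mul_nonneg (hp _).1 (Ppart_nonneg hp x _ _))
      (mul_nonneg (sub_nonneg.2 (hp _).2) (Ppart_nonneg hp x _ _))
  rw [Ppart]
  split_ifs
  · exact mul_le_of_le_one_right hmix (Bpred_le_one _ _ _)
  · exact hmix

lemma swP_succ_le (hp : ∀ n, p n ∈ Set.Icc (0 : ℝ) 1) (x : ℕ → Fin D) {n : ℕ} (hn : 0 < n) :
    swP D p x (n + 1) ≤ swP D p x n := by
  have hstay : ∑ i ∈ Finset.range (n + 2), Ppart D p x n ((i : ℤ) - 1) = swP D p x n := by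
    rw [Finset.sum_range_succ, Ppart_eq_zero x (k := ((n + 1 : ℕ) : ℤ) - 1) (by simp), add_zero,
      swP]
  have hswitch : ∑ i ∈ Finset.range (n + 2), Ppart D p x n ((i : ℤ) - 1 - 1) = swP D p x n := by
    rw [Finset.sum_range_succ', Ppart_eq_zero x (k := ((0 : ℕ) : ℤ) - 1 - 1) (by simp), add_zero,
      swP]
    simp
  calc swP D p x (n + 1)
      ≤ ∑ i ∈ Finset.range (n + 2), (p n * Ppart D p x n ((i : ℤ) - 1) +
          (1 - p n) * Ppart D p x n ((i : ℤ) - 1 - 1)) :=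
        Finset.sum_le_sum fun i _ ↦ Ppart_succ_le hp x hn _
    _ = swP D p x n := by
        rw [Finset.sum_add_distrib, ← Finset.mul_sum, ← Finset.mul_sum, hstay, hswitch]
        ring

lemma swP_le_one (hp : ∀ n, p n ∈ Set.Icc (0 : ℝ) 1) (x : ℕ → Fin D) (n : ℕ) :
    swP D p x n ≤ 1 := by
  match n with
  | 0 => simp [swP, Ppart]
  | n + 1 =>
    induction n with
    | zero =>
      have hB := fun k ↦ Bpred_le_one [] (x 0) k
      calc swP D p x 1 = p 0 * Bpred D [] (x 0) 0 + (1 - p 0) * Bpred D [] (x 0) 1 := by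
            simp [swP, Finset.sum_range_succ, Ppart]
        _ ≤ p 0 * 1 + (1 - p 0) * 1 := by
            gcongr
            exacts [(hp 0).1, hB 0, sub_nonneg.2 (hp 0).2, hB 1]
        _ = 1 := by ring
    | succ n ih => exact (swP_succ_le hp x n.succ_pos).trans ih

lemma swP_nonneg (hp : ∀ n, p n ∈ Set.Icc (0 : ℝ) 1) (x : ℕ → Fin D) (n : ℕ) :
    0 ≤ swP D p x n :=
  Finset.sum_nonneg fun _ _ ↦ Ppart_nonneg hp x n _

lemma Ppart_le_swP (hp : ∀ n, p n ∈ Set.Icc (0 : ℝ) 1) (x : ℕ → Fin D) {k n : ℕ} (h : k < n) :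
    Ppart D p x n k ≤ swP D p x n := by
  simpa [swP] using Finset.single_le_sum (f := fun i : ℕ ↦ Ppart D p x n ((i : ℤ) - 1))
    (fun i _ ↦ Ppart_nonneg hp x n _) (Finset.mem_range.2 (Nat.succ_lt_succ h))

lemma Ppart_mul_le_Ppart_succ (hp : ∀ n, p n ∈ Set.Icc (0 : ℝ) 1) (x : ℕ → Fin D) {k n : ℕ}
    (h : k < n) :
    Ppart D p x n k * (p n * Bpred D (pref x n) (x n) (k + 1)) ≤ Ppart D p x (n + 1) k := by
  obtain ⟨m, rfl⟩ := Nat.exists_eq_add_one_of_ne_zero (Nat.ne_zero_of_lt h)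
  rw [Ppart, if_pos (by omega), show ((k : ℤ) + 1).toNat = k + 1 by omega, ← mul_assoc,
    mul_comm (Ppart D p x (m + 1) k)]
  refine mul_le_mul_of_nonneg_right ?_ (Bpred_pos _ _ _).le
  exact le_add_of_nonneg_right (mul_nonneg (sub_nonneg.2 (hp _).2) (Ppart_nonneg hp x _ _))

lemma Ppart_succ_self_pos (hp : ∀ n, p n ∈ Set.Ico (0 : ℝ) 1) (x : ℕ → Fin D) (k : ℕ) :
    0 < Ppart D p x (k + 1) k := by
  induction k with
  | zero => simpa [Ppart] using mul_pos (sub_pos.2 (hp 0).2) (Bpred_pos [] (x 0) 1)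
  | succ k ih =>
    have hstay : 0 ≤ p (k + 1) * Ppart D p x (k + 1) ((k + 1 : ℕ) : ℤ) :=
      mul_nonneg (hp _).1 (Ppart_nonneg (fun n ↦ Set.Ico_subset_Icc_self (hp n)) x _ _)
    have hswitch : 0 < (1 - p (k + 1)) * Ppart D p x (k + 1) (((k + 1 : ℕ) : ℤ) - 1) := by
      simpa using mul_pos (sub_pos.2 (hp _).2) ih
    rw [Ppart, if_pos (by omega)]
    exact mul_pos (add_pos_of_nonneg_of_pos hstay hswitch) (Bpred_pos _ _ _)

lemma Ppart_pos (hp : ∀ n, p n ∈ Set.Ioo (0 : ℝ) 1) (x : ℕ → Fin D) {k n : ℕ} (h : k < n) :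
    0 < Ppart D p x n k := by
  induction n, h using Nat.le_induction with
  | base => exact Ppart_succ_self_pos (fun n ↦ Set.Ioo_subset_Ico_self (hp n)) x k
  | succ n hn ih =>
    exact (mul_pos ih (mul_pos (hp n).1 (Bpred_pos _ _ _))).trans_le
      (Ppart_mul_le_Ppart_succ (fun n ↦ Set.Ioo_subset_Icc_self (hp n)) x hn)

end SwitchDistribution

section TypicalSequences

variable {D : ℕ} {p : ℕ → ℝ} {x : ℕ → Fin D} {q : List (Fin D) → ℝ}

lemma eventually_forall_word_le_wordCount_div (hp : Tendsto p atTop (𝓝 1))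
    (hfreq : ∀ w, Tendsto (fun n : ℕ ↦ (wordCount x w n : ℝ) / n) atTop (𝓝 (q w)))
    (k : ℕ) {r : ℝ} (hr : r < 1) :
    ∀ᶠ j in atTop, ∀ w, w.length = k + 1 → 0 < q w → 0 < q w.dropLast →
      r * (q w / q w.dropLast) ≤
        p (j + k) * (wordCount x w j / (wordCount x w.dropLast j + 1)) := by
  refine (eventually_all_finite (List.finite_length_eq (Fin D) (k + 1))).2 fun w _ ↦ ?_
  by_cases hw : 0 < q w ∧ 0 < q w.dropLast
  · have hlim := ((tendsto_add_atTop_iff_nat k).2 hp).mul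
      (tendsto_div_add_one_of_tendsto_div (hfreq w) (hfreq w.dropLast) hw.2.ne')
    have hlt : r * (q w / q w.dropLast) < 1 * (q w / q w.dropLast) :=
      mul_lt_mul_of_pos_right hr (div_pos hw.1 hw.2)
    exact (hlim.eventually_const_lt hlt).mono fun j hj _ _ ↦ hj.le
  · exact .of_forall fun j h h' ↦ absurd ⟨h, h'⟩ hw

lemma eventually_neg_log_Ppart_succ_le (hp : ∀ n, p n ∈ Set.Ioo (0 : ℝ) 1)
    (hp1 : Tendsto p atTop (𝓝 1))
    (hfreq : ∀ w, Tendsto (fun n : ℕ ↦ (wordCount x w n : ℝ) / n) atTop (𝓝 (q w)))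
    (hpos : ∀ m j, 0 < q (block x m j)) (k : ℕ) {δ : ℝ} (hδ : 0 < δ) :
    ∀ᶠ j in atTop, -Real.log (Ppart D p x (j + 1 + k) k) ≤ -Real.log (Ppart D p x (j + k) k) +
      (Real.log (q (block x k j)) - Real.log (q (block x (k + 1) j)) + δ) := by
  have hr : Real.exp (-δ) < 1 := Real.exp_lt_one_iff.2 (neg_lt_zero.2 hδ)
  filter_upwards [eventually_forall_word_le_wordCount_div hp1 hfreq k hr, eventually_gt_atTop 0]
    with j hj hj0
  have hqk := hpos k j
  have hqk1 := hpos (k + 1) j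
  have hP := Ppart_pos hp x (show k < j + k by omega)
  have hratio := hj (block x (k + 1) j) (length_block x _ j) hqk1
    (by rwa [dropLast_block_succ])
  rw [dropLast_block_succ] at hratio
  have hstep : Ppart D p x (j + k) k *
      (Real.exp (-δ) * (q (block x (k + 1) j) / q (block x k j))) ≤
        Ppart D p x (j + 1 + k) k := by
    calc _ ≤ Ppart D p x (j + k) k *
          (p (j + k) * Bpred D (pref x (j + k)) (x (j + k)) (k + 1)) := by
          refine mul_le_mul_of_nonneg_left (hratio.trans ?_) hP.le
          exact mul_le_mul_of_nonneg_left (wordCount_div_le_Bpred x k hj0) (hp _).1.le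
      _ ≤ Ppart D p x (j + 1 + k) k := by
          rw [add_right_comm]
          exact Ppart_mul_le_Ppart_succ (fun n ↦ Set.Ioo_subset_Icc_self (hp n)) x (by omega)
  have hlog := Real.log_le_log (by positivity) hstep
  rw [Real.log_mul (by positivity) (by positivity), Real.log_mul (by positivity) (by positivity),
    Real.log_exp, Real.log_div hqk1.ne' hqk.ne'] at hlog
  linarith

theorem limsup_neg_log_swP_div_le (hp : ∀ n, p n ∈ Set.Ioo (0 : ℝ) 1)
    (hp1 : Tendsto p atTop (𝓝 1))
    (hfreq : ∀ w, Tendsto (fun n : ℕ ↦ (wordCount x w n : ℝ) / n) atTop (𝓝 (q w)))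
    (hpos : ∀ m j, 0 < q (block x m j)) {k : ℕ} {l : ℝ}
    (hl : Tendsto (fun j : ℕ ↦ (∑ i ∈ Finset.range j,
      (Real.log (q (block x k i)) - Real.log (q (block x (k + 1) i)))) / j) atTop (𝓝 l)) :
    limsup (fun n : ℕ ↦ -Real.log (swP D p x n) / n) atTop ≤ l := by
  have hp' : ∀ n, p n ∈ Set.Icc (0 : ℝ) 1 := fun n ↦ Set.Ioo_subset_Icc_self (hp n)
  refine limsup_div_le_of_eventually_succ_le (k := k)
    (a := fun j ↦ -Real.log (Ppart D p x (j + k) k)) (fun n ↦ ?_) ?_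
    (fun δ hδ ↦ eventually_neg_log_Ppart_succ_le hp hp1 hfreq hpos k hδ) hl
  · exact neg_nonneg.2 (Real.log_nonpos (swP_nonneg hp' x n) (swP_le_one hp' x n))
  · filter_upwards [eventually_gt_atTop 0] with j hj
    have hk : k < j + k := by omega
    exact neg_le_neg (Real.log_le_log (Ppart_pos hp x hk) (Ppart_le_swP hp' x hk))

end TypicalSequences

section StationaryMeasures

variable {D : ℕ} {Q : Measure (Omega D)}

/-- The set `{X_1^n = w}` of two-sided sequences, where `n` is the length of `w`. -/
def wordSet (w : List (Fin D)) : Set (Omega D) := {ω | pref (path D ω) w.length = w}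

/-- The probability `Q(w)` that the first symbols of a sample path spell the word `w`. Unlike
`Qstr`, it takes the word itself as an argument. -/
noncomputable def wordProb (Q : Measure (Omega D)) (w : List (Fin D)) : ℝ := Q.real (wordSet w)

/-- The information content `-log Q(X_1^n)` of the first `n` symbols of a sample path. -/
noncomputable def blockInfo (Q : Measure (Omega D)) (n : ℕ) (ω : Omega D) : ℝ :=
  -Real.log (Qstr D Q (path D ω) n)

/-- The Shannon entropy of the block `X_1^n` under `Q`. -/
noncomputable def blockEntropy (Q : Measure (Omega D)) (n : ℕ) : ℝ := ∫ ω, blockInfo Q n ω ∂Q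

lemma Qstr_eq_wordProb (x : ℕ → Fin D) (n : ℕ) : Qstr D Q x n = wordProb Q (pref x n) := by
  have hset : cylSet D x n = wordSet (pref x n) := by
    ext ω
    simp [cylSet, wordSet, pref, path]
  rw [Qstr, hset, wordProb, Measure.real]

lemma measurable_comp_pref_path {β : Type*} [MeasurableSpace β] (F : List (Fin D) → β) (n : ℕ) :
    Measurable fun ω ↦ F (pref (path D ω) n) := by
  have hpref : ∀ ω, pref (path D ω) n = List.ofFn fun i : Fin n ↦ ω (((i : ℕ) : ℤ) + 1) :=
    fun ω ↦ List.ext_getElem (by simp) fun i _ _ ↦ by simp [pref, path]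
  simp_rw [hpref]
  exact (Measurable.of_discrete (f := fun v : Fin n → Fin D ↦ F (List.ofFn v))).comp
    (measurable_pi_lambda _ fun _ ↦ measurable_pi_apply _)

lemma measurableSet_wordSet (w : List (Fin D)) : MeasurableSet (wordSet w) :=
  measurableSet_setOfPred.2 (measurable_comp_pref_path (· = w) w.length)

lemma integrable_comp_pref_path [IsFiniteMeasure Q] (F : List (Fin D) → ℝ) (n : ℕ) :
    Integrable (fun ω ↦ F (pref (path D ω) n)) Q := by
  obtain ⟨C, hC⟩ := ((List.finite_length_eq (Fin D) n).image fun w ↦ ‖F w‖).bddAbove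
  exact .of_bound (measurable_comp_pref_path F n).aestronglyMeasurable C
    (.of_forall fun ω ↦ hC ⟨_, length_pref _ n, rfl⟩)

lemma integrable_blockInfo [IsFiniteMeasure Q] (n : ℕ) : Integrable (blockInfo Q n) Q := by
  simpa only [← Qstr_eq_wordProb] using!
    integrable_comp_pref_path (Q := Q) (fun w ↦ -Real.log (wordProb Q w)) n

lemma block_path (ω : Omega D) (m j : ℕ) :
    block (path D ω) m j = pref (path D ((shiftT D)^[j] ω)) m := by
  have hiter : ∀ i : ℤ, (shiftT D)^[j] ω i = ω (i + j) := by
    induction j with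
    | zero => simp
    | succ j ih =>
      intro i
      rw [Function.iterate_succ_apply', shiftT, ih]
      congr 1
      push_cast
      ring
  rw [block]
  congr 1
  funext i
  rw [path, path, hiter]
  congr 1
  push_cast
  ring

lemma iterate_shiftT_mem_wordSet_iff {ω : Omega D} {w : List (Fin D)} {j : ℕ} :
    (shiftT D)^[j] ω ∈ wordSet w ↔ block (path D ω) w.length j = w := by
  rw [wordSet, Set.mem_ofPred_eq, block_path]

lemma blockInfo_iterate_shiftT (n j : ℕ) (ω : Omega D) :
    blockInfo Q n ((shiftT D)^[j] ω) = -Real.log (wordProb Q (block (path D ω) n j)) := by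
  rw [blockInfo, Qstr_eq_wordProb, block_path]

lemma ae_forall_wordProb_block_pos [IsFiniteMeasure Q] (hQ : MeasurePreserving (shiftT D) Q Q) :
    ∀ᵐ ω ∂Q, ∀ m j, 0 < wordProb Q (block (path D ω) m j) := by
  have hmem : ∀ᵐ ω ∂Q, ∀ (w : List (Fin D)) (j : ℕ),
      wordProb Q w = 0 → (shiftT D)^[j] ω ∉ wordSet w := by
    simp_rw [ae_all_iff]
    intro w j hw
    have hnull : Q ((shiftT D)^[j] ⁻¹' wordSet w) = 0 := by
      rw [(hQ.iterate j).measure_preimage (measurableSet_wordSet w).nullMeasurableSet]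
      exact (measureReal_eq_zero_iff).1 hw
    exact measure_eq_zero_iff_ae_notMem.1 hnull
  filter_upwards [hmem] with ω hω m j
  refine measureReal_nonneg.lt_of_ne' fun h0 ↦ hω _ j h0 ?_
  rw [iterate_shiftT_mem_wordSet_iff, length_block]

variable [IsProbabilityMeasure Q]

lemma ae_forall_tendsto_wordCount_div (hQ : Ergodic (shiftT D) Q) :
    ∀ᵐ ω ∂Q, ∀ w, Tendsto (fun n : ℕ ↦ (wordCount (path D ω) w n : ℝ) / n) atTop
      (𝓝 (wordProb Q w)) := by
  classical
  refine ae_all_iff.2 fun w ↦ ?_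
  filter_upwards [ae_tendsto_count_div hQ (measurableSet_wordSet w)] with ω hω
  simpa only [iterate_shiftT_mem_wordSet_iff] using! hω

theorem ae_limsup_neg_log_swP_div_le_blockEntropy_sub {p : ℕ → ℝ}
    (hp : ∀ n, p n ∈ Set.Ioo (0 : ℝ) 1) (hp1 : Tendsto p atTop (𝓝 1))
    (hQ : Ergodic (shiftT D) Q) (k : ℕ) :
    ∀ᵐ ω ∂Q, limsup (fun n : ℕ ↦ -Real.log (swP D p (path D ω) n) / n) atTop ≤
      blockEntropy Q (k + 1) - blockEntropy Q k := by
  have hint := integrable_blockInfo (Q := Q)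
  filter_upwards [ae_forall_tendsto_wordCount_div hQ,
    ae_forall_wordProb_block_pos hQ.toMeasurePreserving,
    ae_tendsto_birkhoffAverage hQ ((hint (k + 1)).sub (hint k))] with ω hfreq hpos havg
  refine limsup_neg_log_swP_div_le (k := k) hp hp1 hfreq hpos ?_
  rw [integral_sub' (hint _) (hint _)] at havg
  refine havg.congr fun j ↦ ?_
  simp only [birkhoffAverage, birkhoffSum, Pi.sub_apply, blockInfo_iterate_shiftT, smul_eq_mul,
    inv_mul_eq_div, neg_sub_neg]

theorem plain_switch_strongly_universal_general {p : ℕ → ℝ} (hp : ∀ n, p n ∈ Set.Ioo (0 : ℝ) 1)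
    (hp1 : Tendsto p atTop (𝓝 1)) (hQerg : Ergodic (shiftT D) Q) {h : ℝ}
    (hent : Tendsto
      (fun n : ℕ ↦ (∫ ω, -Real.log (Qstr D Q (path D ω) n) ∂Q) / n) atTop (𝓝 h)) :
    ∀ᵐ ω ∂Q,
      Filter.limsup (fun n : ℕ ↦ -Real.log (swP D p (path D ω) n) / n) atTop ≤ h := by
  filter_upwards [ae_all_iff.2 (ae_limsup_neg_log_swP_div_le_blockEntropy_sub hp hp1 hQerg)]
    with ω hω
  exact le_of_forall_le_succ_sub hω hent

end StationaryMeasures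

/-- The plain switch distribution is strongly universal: for every stationary ergodic
probability measure `Q` on `Ω = {1,...,D}^ℤ`, `Q`-almost surely
`limsup_{n→∞} (1/n)·(−log P(X_1^n)) ≤ h_Q`, where `h_Q` is the entropy rate of `Q`. -/
theorem plain_switch_strongly_universal
    (D : ℕ) (hD : 2 ≤ D) (p : ℕ → ℝ) (hp : ∀ n, p n ∈ Set.Ioo (0 : ℝ) 1)
    (hprod : ∃ L, 0 < L ∧ Tendsto (fun N : ℕ => ∏ i ∈ Finset.range N, p i) atTop (𝓝 L))
    (Q : Measure (Omega D)) [IsProbabilityMeasure Q]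
    (hQerg : Ergodic (shiftT D) Q)
    (hQ : ℝ)
    (hent : Tendsto
      (fun n : ℕ => (∫ ω, -Real.log (Qstr D Q (path D ω) n) ∂Q) / n) atTop (𝓝 hQ)) :
    ∀ᵐ ω ∂Q,
      Filter.limsup (fun n : ℕ => -Real.log (swP D p (path D ω) n) / n) atTop ≤ hQ := by
  obtain ⟨L, hL, hprod⟩ := hprod
  exact plain_switch_strongly_universal_general hp
    (tendsto_one_of_tendsto_prod_range (fun n ↦ (hp n).1.ne') hL.ne' hprod) hQerg hent
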